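/- Let n ≥ 1, q = (q_1,...,q_n), and δ = (n, n-1, ..., 1). Define Q(q) = ∏_{i=1}^n q_i · ∏_{1≤i<j≤n}(q_i - q_j) · ∏_{1≤i≤j≤n}(1 + q_i q_j). Then Q(q) = Σ_{γ ∈ 𝒞} a_δ(q) s_γ(q), where a_δ(q) = ∏_i q_i ∏_{i<j}(q_i - q_j) and 𝒞 is the set of partitions with Frobenius arm lengths exceeding leg lengths by exactly 1. -/

import Mathlib

open Finset

/-- Complete homogeneous symmetric polynomial of degree `r` evaluated at `x`. -/
noncomputable def hpoly {σ : Type*} [Fintype σ] [DecidableEq σ] {R : Type*} [CommRing R]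
    (x : σ → R) (r : ℕ) : R :=
  ∑ d ∈ (Finset.univ : Finset (σ → Fin (r + 1))).filter (fun d => ∑ i, (d i : ℕ) = r),
    ∏ i, x i ^ ((d i : ℕ))

/-- `hpoly` with integer index, zero for negative degrees. -/
noncomputable def hpolyZ {σ : Type*} [Fintype σ] [DecidableEq σ] {R : Type*} [CommRing R]
    (x : σ → R) (k : ℤ) : R :=
  if 0 ≤ k then hpoly x k.toNat else 0

/-- A partition: weakly decreasing, eventually zero sequence of naturals (0-indexed parts,
so `parts 0` is the first part). -/
structure Partn where
  parts : ℕ → ℕ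
  antitone' : Antitone parts
  eventually_zero : ∃ N, ∀ i, N ≤ i → parts i = 0

/-- The conjugate partition: `conj p j` is the number of parts exceeding `j`
(the length of column `j+1`). -/
noncomputable def Partn.conj (p : Partn) (j : ℕ) : ℕ :=
  Nat.card {i : ℕ | j < p.parts i}

/-- Number of nonzero parts. -/
noncomputable def Partn.len (p : Partn) : ℕ :=
  Nat.card {i : ℕ | 0 < p.parts i}

/-- Membership in `𝒫₁ = 𝒞`: in Frobenius notation every arm length exceeds the
corresponding leg length by exactly 1 (armᵢ = partsᵢ - i - 1, legᵢ = conjᵢ - i - 1,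
0-indexed along the diagonal `i < parts i`). -/
def Partn.InC (p : Partn) : Prop :=
  ∀ i, i < p.parts i → p.parts i = p.conj i + 1

/-- Membership in `𝒫₋₁ = 𝒜` (conjugates of `𝒫₁`): every leg length exceeds the
corresponding arm length by exactly 1. -/
def Partn.InA (p : Partn) : Prop :=
  ∀ i, i < p.parts i → p.conj i = p.parts i + 1

/-- Schur polynomial in `n` variables via the Jacobi–Trudi determinant
`s_p = det(h_{p_i - i + j})_{1 ≤ i,j ≤ ℓ(p)}`; this vanishes when `ℓ(p) > n`. -/
noncomputable def schur {n : ℕ} {R : Type*} [CommRing R] (x : Fin n → R) (p : Partn) : R :=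
  Matrix.det (Matrix.of fun i j : Fin p.len =>
    hpolyZ x ((p.parts i : ℤ) - (i : ℕ) + (j : ℕ)))

/-- Skew Schur polynomial `s_{lam/mu}` in `n` variables via the Jacobi–Trudi determinant
`det(h_{lam_i - mu_j - i + j})`; this vanishes unless `mu ⊆ lam`. -/
noncomputable def skewSchur {n : ℕ} {R : Type*} [CommRing R] (x : Fin n → R)
    (lam mu : Partn) : R :=
  Matrix.det (Matrix.of fun i j : Fin (max lam.len mu.len) =>
    hpolyZ x ((lam.parts i : ℤ) - (mu.parts j : ℕ) - (i : ℕ) + (j : ℕ)))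

/-!
Divide out `∏ qᵢ`. In `t = q⁻¹ - q`, the expression `q⁻¹ ^ (j + 1) + (-1) ^ j * q ^ (j + 1)` is
`q⁻¹ + q` times a monic polynomial of degree `j`, the `j`-th Fibonacci polynomial. Hence
`det (qᵢ ^ (n - 1 - j) + (-1) ^ j * qᵢ ^ (n + 1 + j))` reduces to a Vandermonde determinant in the
`tᵢ`, and since `tⱼ - tᵢ = (qᵢ - qⱼ) * (1 + qᵢ * qⱼ) / (qᵢ * qⱼ)` it equals
`∏_{i < j} (qᵢ - qⱼ) * ∏_{i ≤ j} (1 + qᵢ * qⱼ)`.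

On the other hand, expand the determinant by multilinearity. If the second term is chosen exactly
for `j ∈ J`, sorting the exponents produces the alternant of `γ`, where `γ ∈ 𝒞` has leg lengths `J`
and arm lengths `J + 1`; the sorting permutation cancels the signs. The bialternant formula turns
each alternant into the Vandermonde product times `s_γ`, and `s_γ = 0` if `γ` has more than `n`
parts.
-/

open Polynomial
open scoped PowerSeries

namespace Partn

@[ext]
theorem ext {p r : Partn} (h : ∀ i, p.parts i = r.parts i) : p = r := by
  cases p
  cases r
  simpa only [mk.injEq] using funext h

theorem lt_conj_iff (p : Partn) {i j : ℕ} : i < p.conj j ↔ j < p.parts i := by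
  classical
  have hex : ∃ c, p.parts c ≤ j := by
    obtain ⟨N, hN⟩ := p.eventually_zero
    exact ⟨N, by simp [hN N le_rfl]⟩
  have hcol : {i : ℕ | j < p.parts i} = Set.Iio (Nat.find hex) := by
    ext i
    simp only [Set.mem_ofPred_eq, Set.mem_Iio, Nat.lt_find_iff, not_le]
    exact ⟨fun h k hk => h.trans_le (p.antitone' hk), fun h => h i le_rfl⟩
  have hconj : p.conj j = Nat.find hex := by simp [conj, hcol]
  rw [hconj, ← Set.mem_Iio, ← hcol, Set.mem_ofPred_eq]

theorem conj_eq_of_forall_lt_iff {p : Partn} {j c : ℕ} (h : ∀ i, i < c ↔ j < p.parts i) :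
    p.conj j = c :=
  eq_of_forall_lt_iff fun i => p.lt_conj_iff.trans (h i).symm

theorem lt_len_iff (p : Partn) {i : ℕ} : i < p.len ↔ 0 < p.parts i :=
  p.lt_conj_iff

theorem parts_eq_zero_of_len_le {p : Partn} {i : ℕ} (h : p.len ≤ i) : p.parts i = 0 :=
  Nat.eq_zero_of_not_pos fun hi => h.not_gt (p.lt_len_iff.2 hi)

/-- The empty partition. -/
def empty : Partn where
  parts _ := 0
  antitone' := antitone_const
  eventually_zero := ⟨0, fun _ _ => rfl⟩

theorem len_eq_zero_iff {p : Partn} : p.len = 0 ↔ p = empty := by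
  constructor
  · intro h
    ext i
    exact parts_eq_zero_of_len_le (h.trans_le i.zero_le)
  · rintro rfl
    exact conj_eq_of_forall_lt_iff fun i => by simp [empty]

/-- In Frobenius notation, the partition `(a, a₁, …, aᵣ | l, l₁, …, lᵣ)` obtained from
`p = (a₁, …, aᵣ | l₁, …, lᵣ)`. This is the intended meaning when `a₁ < a` and `l₁ < l`; otherwise
the `max` and the truncation at row `l` keep the parts weakly decreasing. -/
def addHook (a l : ℕ) (p : Partn) : Partn where
  parts
    | 0 => max a (p.parts 0) + 1
    | k + 1 => if k < l then p.parts k + 1 else 0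
  antitone' := by
    refine antitone_nat_of_succ_le fun k => ?_
    rcases k with _ | k
    · grind
    · have := p.antitone' k.le_succ
      grind
  eventually_zero := ⟨l + 1, fun i hi => by
    obtain ⟨k, rfl⟩ := Nat.exists_eq_add_of_le' (Nat.one_le_of_lt hi)
    exact if_neg (by omega)⟩

theorem parts_addHook_zero (a l : ℕ) (p : Partn) :
    (addHook a l p).parts 0 = max a (p.parts 0) + 1 := rfl

theorem parts_addHook_succ (a l : ℕ) (p : Partn) (k : ℕ) :
    (addHook a l p).parts (k + 1) = if k < l then p.parts k + 1 else 0 := rfl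

theorem len_addHook (a l : ℕ) (p : Partn) : (addHook a l p).len = l + 1 := by
  refine conj_eq_of_forall_lt_iff fun i => ?_
  rcases i with _ | i
  · simp [parts_addHook_zero]
  · rw [parts_addHook_succ]
    split_ifs <;> omega

theorem conj_addHook_succ {a l j : ℕ} {p : Partn} (hl : p.len ≤ l) (hj : j < a) :
    (addHook a l p).conj (j + 1) = p.conj j + 1 := by
  refine conj_eq_of_forall_lt_iff fun i => ?_
  rcases i with _ | i
  · rw [parts_addHook_zero]
    omega
  · have hlen := p.lt_len_iff (i := i)
    rw [parts_addHook_succ, Nat.add_lt_add_iff_right, p.lt_conj_iff]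
    split_ifs <;> omega

/-- Removes the first row and the first column, that is, the outermost hook. -/
def removeHook (p : Partn) : Partn where
  parts k := p.parts (k + 1) - 1
  antitone' _ _ hij := Nat.sub_le_sub_right (p.antitone' (Nat.succ_le_succ hij)) 1
  eventually_zero := by
    obtain ⟨N, hN⟩ := p.eventually_zero
    exact ⟨N, fun i hi => by rw [hN (i + 1) (by omega)]⟩

theorem parts_removeHook (p : Partn) (k : ℕ) : p.removeHook.parts k = p.parts (k + 1) - 1 := rfl

theorem conj_removeHook (p : Partn) (j : ℕ) : p.removeHook.conj j = p.conj (j + 1) - 1 := by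
  refine conj_eq_of_forall_lt_iff fun i => ?_
  have := p.lt_conj_iff (i := i + 1) (j := j + 1)
  rw [parts_removeHook]
  omega

theorem len_removeHook_le (p : Partn) : p.removeHook.len ≤ p.len - 1 := by
  by_contra! h
  have hpos := p.removeHook.lt_len_iff.1 h
  rw [parts_removeHook] at hpos
  have := p.lt_len_iff (i := p.len - 1 + 1)
  omega

theorem removeHook_addHook {a l : ℕ} {p : Partn} (hl : p.len ≤ l) :
    (addHook a l p).removeHook = p := by
  ext k
  have := p.lt_len_iff (i := k)
  rw [parts_removeHook, parts_addHook_succ]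
  split_ifs <;> omega

theorem addHook_removeHook {a l : ℕ} {p : Partn} (ha : p.parts 0 = a + 1) (hl : p.len = l + 1) :
    addHook a l p.removeHook = p := by
  ext k
  rcases k with _ | k
  · have hle : p.parts (0 + 1) ≤ p.parts 0 := p.antitone' (Nat.zero_le _)
    rw [parts_addHook_zero, parts_removeHook]
    omega
  · have := p.lt_len_iff (i := k + 1)
    rw [parts_addHook_succ, parts_removeHook]
    split_ifs <;> omega

theorem InC.parts_zero_le {p : Partn} (hp : p.InC) : p.parts 0 ≤ p.len + 1 := by
  rcases (p.parts 0).eq_zero_or_pos with h | h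
  · omega
  · exact (hp 0 h).le

theorem InC.addHook {m : ℕ} {p : Partn} (hp : p.InC) (hm : p.len ≤ m) :
    (addHook (m + 1) m p).InC := by
  have hparts := hp.parts_zero_le
  rintro (_ | k) hk
  · change _ = (Partn.addHook (m + 1) m p).len + 1
    rw [len_addHook, parts_addHook_zero]
    omega
  · have hkm : k < m := by
      by_contra h
      simp [parts_addHook_succ, h] at hk
    rw [parts_addHook_succ, if_pos hkm] at hk ⊢
    rw [hp k (by omega), conj_addHook_succ hm (by omega)]

theorem InC.removeHook {p : Partn} (hp : p.InC) : p.removeHook.InC := by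
  intro k hk
  rw [parts_removeHook] at hk
  have hrow := hp (k + 1) (by omega)
  rw [parts_removeHook, conj_removeHook]
  omega

/-- The partitions in `𝒞` with at most `m` parts. -/
def boundedC (m : ℕ) : Set Partn :=
  {p | p.InC ∧ p.len ≤ m}

theorem boundedC_zero : boundedC 0 = {empty} := by
  ext p
  simp only [boundedC, Set.mem_ofPred_eq, nonpos_iff_eq_zero, len_eq_zero_iff,
    Set.mem_singleton_iff, and_iff_right_iff_imp]
  rintro rfl i hi
  exact absurd hi i.not_lt_zero

theorem boundedC_succ (m : ℕ) :
    boundedC (m + 1) = boundedC m ∪ addHook (m + 1) m '' boundedC m := by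
  ext p
  constructor
  · rintro ⟨hp, hlen⟩
    rcases hlen.lt_or_eq with hlt | hlen
    · exact .inl ⟨hp, Nat.le_of_lt_succ hlt⟩
    · have hpos : 0 < p.parts 0 := p.lt_len_iff.1 (by omega)
      have hzero : p.parts 0 = m + 1 + 1 := (hp 0 hpos).trans (congrArg (· + 1) hlen)
      refine .inr ⟨p.removeHook, ⟨hp.removeHook, ?_⟩, addHook_removeHook hzero hlen⟩
      simpa [hlen] using p.len_removeHook_le
  · rintro (⟨hp, hlen⟩ | ⟨r, ⟨hr, hlen⟩, rfl⟩)
    · exact ⟨hp, hlen.trans m.le_succ⟩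
    · exact ⟨hr.addHook hlen, (len_addHook ..).le⟩

theorem finite_boundedC (m : ℕ) : (boundedC m).Finite := by
  induction m with
  | zero => simp [boundedC_zero]
  | succ m ih => rw [boundedC_succ]; exact ih.union (ih.image _)

theorem finsum_mem_boundedC_succ {A : Type*} [AddCommMonoid A] (f : Partn → A) (m : ℕ) :
    ∑ᶠ p ∈ boundedC (m + 1), f p =
      ∑ᶠ p ∈ boundedC m, f p + ∑ᶠ p ∈ boundedC m, f (addHook (m + 1) m p) := by
  have hdisj : Disjoint (boundedC m) (addHook (m + 1) m '' boundedC m) := by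
    rw [Set.disjoint_left]
    rintro _ ⟨_, hlen⟩ ⟨r, _, rfl⟩
    rw [len_addHook] at hlen
    omega
  have hinj : Set.InjOn (addHook (m + 1) m) (boundedC m) :=
    Set.LeftInvOn.injOn (f₁' := removeHook) fun _ hp => removeHook_addHook hp.2
  rw [boundedC_succ, finsum_mem_union hdisj (finite_boundedC m) ((finite_boundedC m).image _),
    finsum_mem_image hinj]

end Partn

section AlternatingMap

variable {R M N : Type*} [CommRing R] [AddCommGroup M] [Module R M] [AddCommGroup N] [Module R N]

theorem alternatingMap_snoc {m : ℕ} (D : M [⋀^Fin (m + 1)]→ₗ[R] N) (u : Fin m → M) (a : M) :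
    D (Fin.snoc (α := fun _ => M) u a) = ((-1 : R) ^ m • D.curryLeft a) u := by
  have hrot : Fin.snoc (α := fun _ => M) u a = Matrix.vecCons a u ∘ finRotate (m + 1) :=
    Fin.snoc_eq_cons_rotate u a
  rw [hrot, AlternatingMap.map_perm, sign_finRotate, AlternatingMap.smul_apply,
    AlternatingMap.curryLeft_apply_apply]
  rcases m.even_or_odd with hm | hm <;> simp [hm.neg_one_pow]

/-- Each index `j` contributes either `e (-(j + 1))` or `± e (j + 1)`. Choosing the latter at the
last index `m` and moving that vector to the front cancels the sign `(-1) ^ m` and adds to the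
partition a hook of leg length `m` and arm length `m + 1`. -/
theorem alternatingMap_eq_finsum_boundedC (e : ℤ → M) {m : ℕ} (D : M [⋀^Fin m]→ₗ[R] N) :
    D (fun j => e (-(j + 1)) + (-1 : R) ^ (j : ℕ) • e (j + 1)) =
      ∑ᶠ p ∈ Partn.boundedC m, D (fun k => e (p.parts k - (k + 1))) := by
  induction m with
  | zero =>
    rw [Partn.boundedC_zero, finsum_mem_singleton]
    exact congrArg D (Subsingleton.elim _ _)
  | succ m ih =>
    set v : Fin m → M := fun j => e (-(j + 1)) + (-1 : R) ^ (j : ℕ) • e (j + 1)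
    have hsnoc : (fun j : Fin (m + 1) => e (-(j + 1)) + (-1 : R) ^ (j : ℕ) • e (j + 1)) =
        Fin.snoc (α := fun _ => M) v (e (-(m + 1)) + (-1 : R) ^ m • e (m + 1)) := by
      funext j
      refine Fin.lastCases ?_ (fun j => ?_) j <;> simp [v]
    have hsplit : D (Fin.snoc (α := fun _ => M) v (e (-(m + 1)) + (-1 : R) ^ m • e (m + 1))) =
        ((-1 : R) ^ m • D.curryLeft (e (-(m + 1)))) v + D.curryLeft (e (m + 1)) v := by
      simp [alternatingMap_snoc, smul_smul, ← mul_pow]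
    rw [hsnoc, hsplit, ih, ih, Partn.finsum_mem_boundedC_succ]
    congr 1
    · refine finsum_mem_congr rfl fun p hp => ?_
      rw [← alternatingMap_snoc]
      congr 1
      funext j
      refine Fin.lastCases ?_ (fun j => ?_) j
      · simp [Partn.parts_eq_zero_of_len_le hp.2]
      · simp
    · refine finsum_mem_congr rfl fun p hp => ?_
      rw [AlternatingMap.curryLeft_apply_apply]
      congr 1
      funext j
      refine Fin.cases ?_ (fun j => ?_) j
      · have hle : p.parts 0 ≤ m + 1 := hp.1.parts_zero_le.trans (Nat.succ_le_succ hp.2)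
        simp [Partn.parts_addHook_zero, hle]
      · simp [Partn.parts_addHook_succ]

end AlternatingMap

section Determinants

variable {R : Type*} [CommRing R] {n : ℕ}

theorem eval_homogenize_eq_sum (p : R[X]) (m : ℕ) (x : Fin 2 → R) :
    MvPolynomial.eval x (p.homogenize m) =
      ∑ k ∈ range (m + 1), p.coeff k * (x 0 ^ k * x 1 ^ (m - k)) := by
  simp only [homogenize, map_sum, MvPolynomial.eval_monomial]
  rw [← Finset.Nat.sum_antidiagonal_eq_sum_range_succ (fun k l => p.coeff k * (x 0 ^ k * x 1 ^ l))]
  simp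

theorem det_eval_homogenize (P : ℕ → R[X]) (hdeg : ∀ j, (P j).natDegree ≤ j)
    (hlead : ∀ j, (P j).coeff j = 1) (v w : Fin n → R) :
    (Matrix.of fun j i : Fin n =>
        MvPolynomial.eval ![v i, w i] ((P j).homogenize (j.rev + j))).det =
      ∏ i, ∏ j ∈ Ioi i, (v j * w i - v i * w j) := by
  set A : Matrix (Fin n) (Fin n) R := .of fun j k => (P j).coeff k
  have hA : A.det = 1 := by
    rw [Matrix.det_of_isLowerTriangular]
    · simp [A, hlead]
    · exact fun j k hjk => coeff_eq_zero_of_natDegree_lt ((hdeg j).trans_lt hjk)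
  have hmul : (Matrix.of fun j i : Fin n =>
      MvPolynomial.eval ![v i, w i] ((P j).homogenize (j.rev + j))) =
        A * (Matrix.projVandermonde v w).transpose := by
    ext j i
    have hn : (j.rev + j : ℕ) + 1 = n := by rw [Fin.val_rev]; omega
    rw [Matrix.of_apply, eval_homogenize_eq_sum, hn, Matrix.mul_apply,
      ← Fin.sum_univ_eq_sum_range (fun k => (P j).coeff k * (_ ^ k * _ ^ (j.rev + j - k)))]
    refine Finset.sum_congr rfl fun k _ => ?_
    rw [Matrix.transpose_apply, Matrix.projVandermonde_apply,
      show (j.rev + j - k : ℕ) = k.rev by rw [Fin.val_rev k]; omega]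
    rfl
  rw [hmul, Matrix.det_mul, hA, one_mul, Matrix.det_transpose, Matrix.det_projVandermonde]

/-- The Fibonacci polynomials, indexed by degree. Substituting `x⁻¹ - x` for the variable gives
`(x⁻¹ + x) * fibPoly R j = x⁻¹ ^ (j + 1) + (-1) ^ j * x ^ (j + 1)`. -/
noncomputable def fibPoly (R : Type*) [CommRing R] : ℕ → R[X]
  | 0 => 1
  | 1 => X
  | j + 2 => X * fibPoly R (j + 1) + fibPoly R j

theorem natDegree_fibPoly_le (j : ℕ) : (fibPoly R j).natDegree ≤ j := by
  induction j using Nat.twoStepInduction with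
  | zero => simp [fibPoly]
  | one => exact natDegree_X_le
  | more j ih ih' =>
    have hX : (X * fibPoly R (j + 1)).natDegree ≤ 1 + (j + 1) :=
      natDegree_mul_le_of_le natDegree_X_le ih'
    exact natDegree_add_le_of_degree_le (hX.trans (by omega)) (ih.trans (by omega))

theorem coeff_fibPoly_self (j : ℕ) : (fibPoly R j).coeff j = 1 := by
  induction j using Nat.twoStepInduction with
  | zero => simp [fibPoly]
  | one => simp [fibPoly]
  | more j _ ih =>
    have hlow : (fibPoly R j).coeff (j + 2) = 0 :=
      coeff_eq_zero_of_natDegree_lt ((natDegree_fibPoly_le j).trans_lt (by omega))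
    rw [fibPoly, coeff_add, coeff_X_mul, ih, hlow, add_zero]

theorem one_add_sq_mul_eval_homogenize_fibPoly (x : R) (d j : ℕ) :
    (1 + x ^ 2) * MvPolynomial.eval ![1 - x ^ 2, x] ((fibPoly R j).homogenize (d + j)) =
      x ^ d + (-1) ^ j * x ^ (d + 2 * j + 2) := by
  induction j using Nat.twoStepInduction generalizing d with
  | zero =>
    rw [fibPoly, homogenize_one]
    simp only [map_pow, MvPolynomial.eval_X, Matrix.cons_val_one, Matrix.cons_val_fin_one]
    ring
  | one =>
    rw [fibPoly, homogenize_X d.succ_ne_zero, Nat.succ_sub_one]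
    simp only [map_mul, map_pow, MvPolynomial.eval_X, Matrix.cons_val_zero, Matrix.cons_val_one,
      Matrix.cons_val_fin_one]
    ring
  | more j ih ih' =>
    have hrec : (fibPoly R (j + 2)).homogenize (d + (j + 2)) =
        .X 0 * (fibPoly R (j + 1)).homogenize (d + (j + 1)) +
          (fibPoly R j).homogenize (d + 2 + j) := by
      rw [fibPoly, homogenize_add, show d + (j + 2) = 1 + (d + (j + 1)) by ring,
        homogenize_mul _ _ natDegree_X_le ((natDegree_fibPoly_le _).trans (by omega)),
        show 1 + (d + (j + 1)) = d + 2 + j by ring]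
      simp
    rw [hrec, map_add, map_mul, mul_add, mul_left_comm, ih, ih']
    simp only [MvPolynomial.eval_X, Matrix.cons_val_zero]
    ring

theorem det_pow_rev_add_pow (x : Fin n → R) :
    (Matrix.of fun j i : Fin n => x i ^ (j.rev : ℕ) + (-1) ^ (j : ℕ) * x i ^ (n + j + 1)).det =
      (∏ i, ∏ j ∈ Ioi i, (x i - x j)) * ∏ i, ∏ j ∈ Ici i, (1 + x i * x j) := by
  have hentry : ∀ i j : Fin n, x i ^ (j.rev : ℕ) + (-1) ^ (j : ℕ) * x i ^ (n + j + 1) =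
      (1 + x i ^ 2) *
        MvPolynomial.eval ![1 - x i ^ 2, x i] ((fibPoly R j).homogenize (j.rev + j)) := by
    intro i j
    rw [one_add_sq_mul_eval_homogenize_fibPoly,
      show n + j + 1 = j.rev + 2 * j + 2 by rw [Fin.val_rev]; omega]
  have hfactor : ∀ i j : Fin n, (1 - x j ^ 2) * x i - (1 - x i ^ 2) * x j =
      (x i - x j) * (1 + x i * x j) := fun i j => by ring
  simp_rw [hentry]
  refine (Matrix.det_mul_row (fun i => 1 + x i ^ 2) (.of fun j i : Fin n =>
    MvPolynomial.eval ![1 - x i ^ 2, x i] ((fibPoly R j).homogenize (j.rev + j)))).trans ?_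
  rw [det_eval_homogenize (fibPoly R) natDegree_fibPoly_le coeff_fibPoly_self
    (fun i => 1 - x i ^ 2) x]
  simp_rw [hfactor, prod_mul_distrib, ← mul_prod_Ioi_eq_prod_Ici, prod_mul_distrib, ← sq]
  ring

end Determinants

section JacobiTrudi

section GeneratingFunctions

variable {σ R : Type*} [CommRing R] (x : σ → R)

/-- The polynomial `∏_{i ∈ s} (1 - xᵢ t) = ∑ₖ (-1)ᵏ eₖ(xᵢ : i ∈ s) tᵏ`. -/
noncomputable def eGenPoly (s : Finset σ) : R[X] :=
  ∏ i ∈ s, (1 - C (x i) * X)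

theorem natDegree_eGenPoly_le (s : Finset σ) : (eGenPoly x s).natDegree ≤ s.card := by
  rw [card_eq_sum_ones]
  exact (natDegree_prod_le _ _).trans (sum_le_sum fun i _ => by compute_degree)

theorem coeff_zero_eGenPoly (s : Finset σ) : (eGenPoly x s).coeff 0 = 1 := by
  simp [eGenPoly, coeff_zero_prod]

variable [Fintype σ] [DecidableEq σ]

/-- The generating function `∑ᵣ hᵣ(x) tʳ = ∏ᵢ (1 - xᵢ t)⁻¹`. -/
noncomputable def hGenFun : R⟦X⟧ :=
  ∏ i, PowerSeries.mk (x i ^ ·)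

theorem coeff_hGenFun (r : ℕ) : PowerSeries.coeff r (hGenFun x) = hpoly x r := by
  rw [hGenFun, PowerSeries.coeff_prod, hpoly]
  symm
  refine Finset.sum_nbij (fun d => Finsupp.equivFunOnFinite.symm fun i => (d i : ℕ)) ?_ ?_ ?_ ?_
  · intro d hd
    simpa [mem_finsuppAntidiag] using hd
  · intro d _ d' _ h
    funext i
    exact Fin.ext (DFunLike.congr_fun h i)
  · intro l hl
    have hsum : ∑ i, l i = r := (mem_finsuppAntidiag.1 hl).1
    have hle : ∀ i, l i < r + 1 := fun i => by
      rw [Nat.lt_succ_iff, ← hsum]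
      exact single_le_sum (fun _ _ => Nat.zero_le _) (mem_univ i)
    exact ⟨fun i => ⟨l i, hle i⟩, by simpa using hsum, by ext; simp⟩
  · simp

theorem hpolyZ_of_neg {k : ℤ} (hk : k < 0) : hpolyZ x k = 0 :=
  if_neg hk.not_ge

theorem hpolyZ_zero : hpolyZ x 0 = 1 := by
  rw [hpolyZ, if_pos le_rfl, ← coeff_hGenFun, hGenFun]
  simp

theorem mk_pow_mul_one_sub_C_mul_X (a : R) :
    PowerSeries.mk (a ^ ·) * (1 - PowerSeries.C a * PowerSeries.X) = 1 := by
  simpa [PowerSeries.rescale_mk, PowerSeries.rescale_X] using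
    congrArg (PowerSeries.rescale a) (PowerSeries.mk_one_mul_one_sub_eq_one R)

theorem coe_eGenPoly_mul_hGenFun (s : Finset σ) :
    (eGenPoly x s : R⟦X⟧) * hGenFun x = ∏ i ∈ sᶜ, PowerSeries.mk (x i ^ ·) := by
  have hcoe : (eGenPoly x s : R⟦X⟧) =
      ∏ i ∈ s, (1 - PowerSeries.C (x i) * PowerSeries.X) := by
    rw [eGenPoly, ← coeToPowerSeries.ringHom_apply, map_prod]
    simp
  rw [hcoe, hGenFun, ← prod_mul_prod_compl s, ← mul_assoc, mul_comm (∏ i ∈ s, _),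
    ← prod_mul_distrib, prod_eq_one fun i _ => mk_pow_mul_one_sub_C_mul_X (x i), one_mul]

theorem coeff_coe_mul_hGenFun {N : ℕ} {P : R[X]} (hP : P.natDegree < N) (m : ℕ) :
    PowerSeries.coeff m ((P : R⟦X⟧) * hGenFun x) =
      ∑ k : Fin N, hpolyZ x (m - k) * P.coeff k := by
  have hshift : ∀ k : ℕ, PowerSeries.coeff m (PowerSeries.X ^ k * hGenFun x) =
      hpolyZ x (m - k) := by
    intro k
    rw [PowerSeries.coeff_X_pow_mul', hpolyZ, coeff_hGenFun]
    by_cases hk : k ≤ m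
    · rw [if_pos hk, if_pos (by omega), show ((m : ℤ) - k).toNat = m - k by omega]
    · rw [if_neg hk, if_neg (by omega)]
  rw [Fin.sum_univ_eq_sum_range (fun k => hpolyZ x (m - k) * P.coeff k)]
  conv_lhs => rw [P.as_sum_range' N hP, ← coeToPowerSeries.ringHom_apply, map_sum, sum_mul, map_sum]
  refine sum_congr rfl fun k _ => ?_
  rw [coeToPowerSeries.ringHom_apply, ← C_mul_X_pow_eq_monomial, Polynomial.coe_mul, coe_C,
    Polynomial.coe_pow, coe_X, mul_assoc, PowerSeries.coeff_C_mul, hshift, mul_comm]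

/-- For `s = univ` the right side vanishes in positive degree; for `s = {i}ᶜ` it is `xᵢ ^ m`. -/
theorem sum_hpolyZ_mul_coeff_eGenPoly {N : ℕ} {s : Finset σ} (hs : s.card < N) (m : ℕ) :
    ∑ j : Fin N, hpolyZ x (m - (j.rev : ℕ)) * (eGenPoly x s).coeff j.rev =
      PowerSeries.coeff m (∏ i ∈ sᶜ, PowerSeries.mk (x i ^ ·)) := by
  rw [← coe_eGenPoly_mul_hGenFun,
    coeff_coe_mul_hGenFun x ((natDegree_eGenPoly_le x s).trans_lt hs)]
  exact Equiv.sum_comp Fin.revPerm fun j : Fin N => hpolyZ x (m - (j : ℕ)) * (eGenPoly x s).coeff j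

end GeneratingFunctions

variable {R : Type*} [CommRing R] {n : ℕ} (x : Fin n → R)

/-- The Jacobi–Trudi matrix of `p` of size `N`, whose determinant is `schur x p` as soon as
`p.len ≤ N`. -/
noncomputable def jacobiTrudi (p : Partn) (N : ℕ) : Matrix (Fin N) (Fin N) R :=
  Matrix.of fun i j => hpolyZ x ((p.parts i : ℤ) - (i : ℕ) + (j : ℕ))

theorem det_jacobiTrudi_of_len_le {p : Partn} {N : ℕ} (h : p.len ≤ N) :
    (jacobiTrudi x p N).det = schur x p := by
  induction N, h using Nat.le_induction with
  | base => rfl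
  | succ N hN ih =>
    have hlast : ∀ j : Fin N, jacobiTrudi x p (N + 1) (Fin.last N) j.castSucc = 0 := fun j =>
      hpolyZ_of_neg x (by simp [Partn.parts_eq_zero_of_len_le hN])
    have hdiag : jacobiTrudi x p (N + 1) (Fin.last N) (Fin.last N) = 1 := by
      simp [jacobiTrudi, Partn.parts_eq_zero_of_len_le hN, hpolyZ_zero]
    have hsub : (jacobiTrudi x p (N + 1)).submatrix Fin.castSucc Fin.castSucc =
        jacobiTrudi x p N := rfl
    rw [Matrix.det_succ_row _ (Fin.last N), Fin.sum_univ_castSucc]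
    simp [hlast, hdiag, hsub, ih]

theorem det_smul_eq_zero_of_mulVec_eq_zero {ι : Type*} [Fintype ι] [DecidableEq ι]
    {A : Matrix ι ι R} {v : ι → R} (h : A.mulVec v = 0) : A.det • v = 0 := by
  rw [← Matrix.one_mulVec v, ← Matrix.smul_mulVec, ← Matrix.adjugate_mul, ← Matrix.mulVec_mulVec,
    h, Matrix.mulVec_zero]

theorem schur_eq_zero_of_lt_len {p : Partn} (h : n < p.len) : schur x p = 0 := by
  have hker : (jacobiTrudi x p p.len).mulVec
      (fun j => (eGenPoly x univ).coeff j.rev) = 0 := by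
    funext i
    have hpos : 0 < p.parts i := p.lt_len_iff.1 i.2
    have hsum := sum_hpolyZ_mul_coeff_eGenPoly x (s := univ) (by simpa using h)
      (p.parts i + i.rev)
    rw [compl_univ, prod_empty, PowerSeries.coeff_one, if_neg (by omega)] at hsum
    rw [Pi.zero_apply, ← hsum, Matrix.mulVec, dotProduct]
    refine sum_congr rfl fun j _ => ?_
    rw [jacobiTrudi, Matrix.of_apply]
    congr 2
    simp only [Fin.val_rev]
    omega
  have hlast := congrFun (det_smul_eq_zero_of_mulVec_eq_zero hker) ⟨p.len - 1, by omega⟩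
  have hrev : ((⟨p.len - 1, by omega⟩ : Fin p.len).rev : ℕ) = 0 := by
    rw [Fin.val_rev, Nat.sub_eq_zero_iff_le]
    exact Nat.le_add_of_sub_le le_rfl
  rwa [Pi.smul_apply, hrev, coeff_zero_eGenPoly, smul_eq_mul, mul_one, Pi.zero_apply,
    det_jacobiTrudi_of_len_le x le_rfl] at hlast

/-- The alternant `a_α(x) = det (xⱼ ^ αᵢ)`. For `αⱼ = n - 1 - j`, the value of `j.rev`, it is the
Vandermonde product. -/
def alternant (α : Fin n → ℕ) : R :=
  (Matrix.of fun i j => x j ^ α i).det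

theorem alternant_rev :
    alternant x (fun j => (j.rev : ℕ)) = ∏ i, ∏ j ∈ Ioi i, (x i - x j) := by
  have hmatrix : (Matrix.of fun i j => x j ^ (i.rev : ℕ)) =
      (Matrix.projVandermonde 1 x).transpose := by
    ext i j
    simp [Matrix.projVandermonde_apply]
  rw [alternant, hmatrix, Matrix.det_transpose, Matrix.det_projVandermonde]
  simp

theorem alternant_eq_det_hpolyZ_mul_alternant_rev (α : Fin n → ℕ) :
    alternant x α = (Matrix.of fun i j : Fin n => hpolyZ x (α i - (j.rev : ℕ))).det *
      alternant x (fun j => (j.rev : ℕ)) := by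
  set E : Matrix (Fin n) (Fin n) R := .of fun j i => (eGenPoly x {i}ᶜ).coeff j.rev
  have hE : ∀ β : Fin n → ℕ, alternant x β =
      (Matrix.of fun i j : Fin n => hpolyZ x (β i - (j.rev : ℕ))).det * E.det := by
    intro β
    rw [alternant, ← Matrix.det_mul]
    congr 1
    ext k i
    have hcard : ({i}ᶜ : Finset (Fin n)).card < n := by
      simpa [card_compl] using i.pos
    rw [Matrix.mul_apply]
    refine .trans ?_ (sum_hpolyZ_mul_coeff_eGenPoly x hcard (β k)).symm
    simp
  have htriangular : (Matrix.of fun i j : Fin n =>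
      hpolyZ x ((i.rev : ℕ) - (j.rev : ℕ))).det = 1 := by
    rw [Matrix.det_of_isUpperTriangular]
    · simp [hpolyZ_zero]
    · intro i j (hij : j < i)
      refine hpolyZ_of_neg x ?_
      rw [sub_neg, Nat.cast_lt, Fin.val_fin_lt, Fin.rev_lt_rev]
      exact hij
  rw [hE α, hE (fun j => j.rev), htriangular, one_mul]

theorem schur_mul_alternant_rev {p : Partn} (h : p.len ≤ n) :
    schur x p * alternant x (fun j => (j.rev : ℕ)) =
      alternant x (fun j => p.parts j + (j.rev : ℕ)) := by
  rw [alternant_eq_det_hpolyZ_mul_alternant_rev x (fun j => p.parts j + (j.rev : ℕ)),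
    ← det_jacobiTrudi_of_len_le x h]
  congr 2
  ext i j
  rw [jacobiTrudi, Matrix.of_apply, Matrix.of_apply]
  congr 1
  simp only [Fin.val_rev]
  omega

end JacobiTrudi

theorem prod_sub_mul_prod_one_add_mul_eq_finsum_schur {R : Type*} [CommRing R] {n : ℕ}
    (x : Fin n → R) :
    (∏ i, ∏ j ∈ Ioi i, (x i - x j)) * ∏ i, ∏ j ∈ Ici i, (1 + x i * x j) =
      ∑ᶠ p ∈ Partn.boundedC n, (∏ i, ∏ j ∈ Ioi i, (x i - x j)) * schur x p := by
  set e : ℤ → Fin n → R := fun z i => x i ^ (n + z).toNat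
  have hrow : ∀ j : Fin n, e (-(j + 1)) + (-1 : R) ^ (j : ℕ) • e (j + 1) =
      fun i => x i ^ (j.rev : ℕ) + (-1) ^ (j : ℕ) * x i ^ (n + j + 1) := by
    intro j
    funext i
    simp only [e, Pi.add_apply, Pi.smul_apply, smul_eq_mul]
    congr 3
    grind
  have hterm : ∀ p ∈ Partn.boundedC n,
      Matrix.detRowAlternating (fun k : Fin n => e (p.parts k - (k + 1))) =
        (∏ i, ∏ j ∈ Ioi i, (x i - x j)) * schur x p := by
    intro p hp
    rw [mul_comm, ← alternant_rev, schur_mul_alternant_rev x hp.2, alternant]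
    congr 1
    ext k i
    simp only [e, Matrix.of_apply]
    congr 1
    rw [Fin.val_rev]
    omega
  rw [← det_pow_rev_add_pow, ← finsum_mem_congr rfl hterm, ← alternatingMap_eq_finsum_boundedC]
  simp_rw [hrow]
  rfl

/-- `Q(q) = ∏ q_i ∏_{i<j}(q_i - q_j) ∏_{i≤j}(1 + q_i q_j) = Σ_{γ ∈ 𝒞} a_δ(q) s_γ(q)`,
where `a_δ(q) = ∏ q_i ∏_{i<j}(q_i - q_j)` and `𝒞 = 𝒫₁`. -/
theorem Q_eq_sum_adelta_schur {R : Type*} [CommRing R] {n : ℕ} (hn : 1 ≤ n)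
    (q : Fin n → R) :
    (∏ i : Fin n, q i) *
      (∏ i : Fin n, ∏ j ∈ Finset.univ.filter (fun j => i < j), (q i - q j)) *
      (∏ i : Fin n, ∏ j ∈ Finset.univ.filter (fun j => i ≤ j), (1 + q i * q j)) =
    ∑ᶠ (γ : Partn) (_ : γ.InC),
      ((∏ i : Fin n, q i) *
        (∏ i : Fin n, ∏ j ∈ Finset.univ.filter (fun j => i < j), (q i - q j))) *
        schur q γ := by
  simp only [filter_lt_eq_Ioi, filter_le_eq_Ici]
  have hsupp : ∀ γ ∈ Function.support
      fun γ => ((∏ i, q i) * ∏ i, ∏ j ∈ Ioi i, (q i - q j)) * schur q γ,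
      (γ ∈ Partn.boundedC n ↔ γ.InC) := by
    refine fun γ hγ => and_iff_left_of_imp fun _ => ?_
    by_contra! hlen
    simp [schur_eq_zero_of_lt_len q hlen] at hγ
  calc
    _ = (∏ i, q i) * ∑ᶠ γ ∈ Partn.boundedC n, (∏ i, ∏ j ∈ Ioi i, (q i - q j)) * schur q γ := by
      rw [mul_assoc, prod_sub_mul_prod_one_add_mul_eq_finsum_schur]
    _ = ∑ᶠ γ ∈ Partn.boundedC n,
          ((∏ i, q i) * ∏ i, ∏ j ∈ Ioi i, (q i - q j)) * schur q γ := by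
      simp only [mul_finsum_mem' _ _ (Partn.finite_boundedC n), mul_assoc]
    _ = _ := finsum_mem_inter_support_eq' _ _ (Set.ofPred Partn.InC) hsupp
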